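/- arXiv:2503.00966 — 2 statements merged into one kernel-verified Lean document; each statement's English description precedes it below -/
import Mathlib

section
/- Let A, B, C, E be finite-dimensional complex inner product spaces and Ψ ∈ A ⊗ B ⊗ C ⊗ E. Let a ∈ A, b ∈ B, c ∈ C be unit vectors. Suppose the contraction of Ψ against a in the A-slot is nonzero and equals b ⊗ χ for some χ ∈ C ⊗ E, and the contraction of Ψ against b in the B-slot is nonzero and equals (up to reordering of factors) c ⊗ χ′ for some χ′ ∈ A ⊗ E. Then the contraction of Ψ against a in the A-slot equals b ⊗ c ⊗ χ″ for some nonzero χ″ ∈ E. -/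
/-!
Statement 1: the inductive step of chained relative states, in the four-factor case
`Ψ ∈ A ⊗ B ⊗ C ⊗ E` (associated as `A ⊗ (B ⊗ (C ⊗ E))`).

The contraction of `Ψ` against a unit vector `φ` in a slot is `(⟨φ| ⊗ I)Ψ`,
implemented by `contractFirst φ` acting on the first factor of a binary tensor
product (other slots are reached by tensoring with identities); `(⟨φ| ⊗ I)` is
`TensorProduct.map ⟨φ| id` followed by the canonical identification `ℂ ⊗ M ≃ M`.
The reordering `C ⊗ (A ⊗ E) ≃ A ⊗ (C ⊗ E)` is the canonical `TensorProduct.leftComm`.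
-/

open scoped TensorProduct

noncomputable section

/-- The linear functional `⟨φ| = ⟪φ, ·⟫` on an inner product space. -/
def bra {H : Type*} [NormedAddCommGroup H] [InnerProductSpace ℂ H] (φ : H) :
    H →ₗ[ℂ] ℂ :=
  (innerSL ℂ φ).toLinearMap

/-- Contraction `(⟨φ| ⊗ I) : H ⊗ M →ₗ M` against `φ` in the first slot. -/
def contractFirst {H M : Type*} [NormedAddCommGroup H] [InnerProductSpace ℂ H]
    [AddCommGroup M] [Module ℂ M] (φ : H) : H ⊗[ℂ] M →ₗ[ℂ] M :=
  (TensorProduct.lid ℂ M).toLinearMap ∘ₗ TensorProduct.map (bra φ) LinearMap.id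

section contractFirst

variable {H M N : Type*} [NormedAddCommGroup H] [InnerProductSpace ℂ H]
  [AddCommGroup M] [Module ℂ M] [AddCommGroup N] [Module ℂ N]

@[simp]
theorem contractFirst_tmul (φ x : H) (m : M) :
    contractFirst φ (x ⊗ₜ[ℂ] m) = inner ℂ φ x • m := by
  simp [contractFirst, bra]

theorem contractFirst_map_id (φ : H) (f : M →ₗ[ℂ] N) (t : H ⊗[ℂ] M) :
    contractFirst φ (TensorProduct.map LinearMap.id f t) = f (contractFirst φ t) := by
  induction t with
  | zero => simp
  | tmul x m => simp
  | add s t hs ht => simp only [map_add, hs, ht]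

theorem contractFirst_leftComm_tmul (φ : H) (m : M) (t : H ⊗[ℂ] N) :
    contractFirst φ (TensorProduct.leftComm ℂ M H N (m ⊗ₜ[ℂ] t)) =
      m ⊗ₜ[ℂ] contractFirst φ t := by
  induction t with
  | zero => simp
  | tmul x n => simp
  | add s t hs ht => simp only [TensorProduct.tmul_add, map_add, hs, ht]

end contractFirst

-- Contractions in the `A`- and `B`-slots commute. Doing both, in the two orders, computes the same
-- vector as `⟪b, b⟫ • χ` and as `c ⊗ₜ contractFirst a χ'`, so `χ` splits off the factor `c`.
theorem chained_relative_states_inductive_step_general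
    {A B C E : Type*}
    [NormedAddCommGroup A] [InnerProductSpace ℂ A]
    [NormedAddCommGroup B] [InnerProductSpace ℂ B]
    [AddCommGroup C] [Module ℂ C] [AddCommGroup E] [Module ℂ E]
    (Ψ : A ⊗[ℂ] (B ⊗[ℂ] (C ⊗[ℂ] E))) (a : A) (b : B) (c : C)
    (hA0 : contractFirst a Ψ ≠ 0)
    (hA : ∃ χ : C ⊗[ℂ] E, contractFirst a Ψ = b ⊗ₜ[ℂ] χ)
    (hB : ∃ χ' : A ⊗[ℂ] E, TensorProduct.map LinearMap.id (contractFirst b) Ψ =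
      TensorProduct.leftComm ℂ C A E (c ⊗ₜ[ℂ] χ')) :
    ∃ χ'' : E, χ'' ≠ 0 ∧ contractFirst a Ψ = b ⊗ₜ[ℂ] (c ⊗ₜ[ℂ] χ'') := by
  obtain ⟨χ, hχ⟩ := hA
  obtain ⟨χ', hχ'⟩ := hB
  have inner_smul_χ : inner ℂ b b • χ = c ⊗ₜ[ℂ] contractFirst a χ' :=
    calc inner ℂ b b • χ = contractFirst b (contractFirst a Ψ) := by rw [hχ, contractFirst_tmul]
      _ = contractFirst a (TensorProduct.map LinearMap.id (contractFirst b) Ψ) :=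
        (contractFirst_map_id a (contractFirst b) Ψ).symm
      _ = c ⊗ₜ[ℂ] contractFirst a χ' := by rw [hχ', contractFirst_leftComm_tmul]
  have b_ne_zero : b ≠ 0 := by
    rintro rfl
    exact hA0 (by rw [hχ, TensorProduct.zero_tmul])
  have χ_eq : χ = c ⊗ₜ[ℂ] ((inner ℂ b b)⁻¹ • contractFirst a χ') := by
    rw [TensorProduct.tmul_smul, ← inner_smul_χ, inv_smul_smul₀ (inner_self_ne_zero.mpr b_ne_zero)]
  rw [χ_eq] at hχ
  refine ⟨_, fun h => hA0 ?_, hχ⟩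
  rw [hχ, h, TensorProduct.tmul_zero, TensorProduct.tmul_zero]

theorem chained_relative_states_inductive_step
    {A B C E : Type*}
    [NormedAddCommGroup A] [InnerProductSpace ℂ A] [FiniteDimensional ℂ A]
    [NormedAddCommGroup B] [InnerProductSpace ℂ B] [FiniteDimensional ℂ B]
    [NormedAddCommGroup C] [InnerProductSpace ℂ C] [FiniteDimensional ℂ C]
    [NormedAddCommGroup E] [InnerProductSpace ℂ E] [FiniteDimensional ℂ E]
    (Ψ : A ⊗[ℂ] (B ⊗[ℂ] (C ⊗[ℂ] E)))
    (a : A) (b : B) (c : C) (ha : ‖a‖ = 1) (hb : ‖b‖ = 1) (hc : ‖c‖ = 1)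
    -- the contraction of Ψ against a in the A-slot is nonzero and equals b ⊗ χ
    (hA0 : contractFirst a Ψ ≠ 0)
    (hA : ∃ χ : C ⊗[ℂ] E, contractFirst a Ψ = b ⊗ₜ[ℂ] χ)
    -- the contraction of Ψ against b in the B-slot is nonzero and equals
    -- (up to the canonical reordering) c ⊗ χ′ with χ′ ∈ A ⊗ E
    (hB0 : TensorProduct.map LinearMap.id (contractFirst b) Ψ ≠ 0)
    (hB : ∃ χ' : A ⊗[ℂ] E, TensorProduct.map LinearMap.id (contractFirst b) Ψ =
      TensorProduct.leftComm ℂ C A E (c ⊗ₜ[ℂ] χ')) :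
    ∃ χ'' : E, χ'' ≠ 0 ∧ contractFirst a Ψ = b ⊗ₜ[ℂ] (c ⊗ₜ[ℂ] χ'') := by
  exact chained_relative_states_inductive_step_general Ψ a b c hA0 hA hB

end
end

section
/- Let H_R = H_S = ℂ² with standard basis e₀, e₁, and let H_A = H_B = H_U = H_W = ℂ³ with orthonormal bases {b₀, b₁, b⊥} for H_A and H_B and {v₊, v₋, v⊥} for H_U and H_W. Set Φ±_{RA} = (e₀ ⊗ b₀ ± e₁ ⊗ b₁)/√2 ∈ H_R ⊗ H_A and Φ±_{SB} = (e₀ ⊗ b₀ ± e₁ ⊗ b₁)/√2 ∈ H_S ⊗ H_B. Let Ψ₀ = (√(1/3) e₀ + √(2/3) e₁)_R ⊗ (b⊥)_A ⊗ (e₀)_S ⊗ (b⊥)_B ⊗ (v⊥)_U ⊗ (v⊥)_W. Let M_A, P, M_B, M_U, M_W be any unitary operators on the full tensor product H_R ⊗ H_A ⊗ H_S ⊗ H_B ⊗ H_U ⊗ H_W acting as the identity outside the indicated factors and satisfying: M_A(e_r ⊗ b⊥) = e_r ⊗ b_r on H_R ⊗ H_A for r ∈ {0,1}; P(b₀ ⊗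 e_s) = b₀ ⊗ e_s, P(b₁ ⊗ e₀) = b₁ ⊗ (e₀+e₁)/√2, P(b₁ ⊗ e₁) = b₁ ⊗ (e₀−e₁)/√2 on H_A ⊗ H_S; M_B(e_s ⊗ b⊥) = e_s ⊗ b_s on H_S ⊗ H_B for s ∈ {0,1}; M_U(Φ±_{RA} ⊗ v⊥) = Φ±_{RA} ⊗ v± on H_R ⊗ H_A ⊗ H_U; M_W(Φ±_{SB} ⊗ v⊥) = Φ±_{SB} ⊗ v± on H_S ⊗ H_B ⊗ H_W. Then M_W M_U M_B P M_A Ψ₀ = √(3/4) Φ⁺_{RA} ⊗ Φ⁺_{SB} ⊗ v₊ ⊗ v₊ + √(1/12) Φ⁺_{RA} ⊗ Φ⁻_{SB} ⊗ v₊ ⊗ v₋ − √(1/12) Φ⁻_{RA} ⊗ Φ⁺_{SB} ⊗ v₋ ⊗ v₊ + √(1/12) Φ⁻_{RA} ⊗ Φ⁻_{SB} ⊗ v₋ ⊗ v₋ (with the tensor factors reordered as R, A, S, B, U, W). -/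
/-!
Statement 9: computation of the final state of the Frauchiger–Renner protocol
(Eq. (3) of the paper).

`H_R = H_S = ℂ²` with basis `e 0, e 1`; `H_A = H_B = H_U = H_W = ℂ³`.  In the `A`
and `B` factors the basis `bv 0, bv 1, bv 2` plays the role of `b₀, b₁, b⊥`, and in
the `U` and `W` factors it plays the role of `v₊, v₋, v⊥`.  The total space is
`T = R ⊗ (A ⊗ (S ⊗ (B ⊗ (U ⊗ W))))`.

Each protocol operator acts as the identity outside the indicated factors: it is the
conjugate, by the canonical reordering equivalence moving the indicated factors to
the front, of `m ⊗ id` where `m` is an operator on the indicated factors alone.  The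
theorem is stated for arbitrary (not necessarily unitary) extensions `m` satisfying
the specified partial actions; this covers in particular all unitary extensions,
which is all that is needed since the initial state only meets the specified
domains (and unitarity of an operator on the full tensor product is not expressible
in Mathlib, which lacks an inner product space structure on tensor products).
-/

open scoped TensorProduct

set_option synthInstance.maxHeartbeats 1000000
set_option maxHeartbeats 1000000

noncomputable section

/-- The qubit space `ℂ²` (systems `R` and `S`). -/
abbrev Q : Type := EuclideanSpace ℂ (Fin 2)

/-- The agent space `ℂ³` (systems `A`, `B`, `U`, `W`). -/
abbrev A3 : Type := EuclideanSpace ℂ (Fin 3)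

/-- The standard orthonormal basis of `ℂ²`. -/
def e (i : Fin 2) : Q := EuclideanSpace.single i 1

/-- The standard orthonormal basis of `ℂ³`: `bv 0 = b₀ = v₊`, `bv 1 = b₁ = v₋`,
`bv 2 = b⊥ = v⊥`. -/
def bv (i : Fin 3) : A3 := EuclideanSpace.single i 1

/-- `√x` as a complex scalar. -/
def c (x : ℝ) : ℂ := (Real.sqrt x : ℂ)

/-- `Φ⁺ = (e₀ ⊗ b₀ + e₁ ⊗ b₁)/√2` (used for both `Φ⁺_{RA}` and `Φ⁺_{SB}`). -/
def Φp : Q ⊗[ℂ] A3 := (c 2)⁻¹ • (e 0 ⊗ₜ[ℂ] bv 0 + e 1 ⊗ₜ[ℂ] bv 1)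

/-- `Φ⁻ = (e₀ ⊗ b₀ − e₁ ⊗ b₁)/√2` (used for both `Φ⁻_{RA}` and `Φ⁻_{SB}`). -/
def Φm : Q ⊗[ℂ] A3 := (c 2)⁻¹ • (e 0 ⊗ₜ[ℂ] bv 0 - e 1 ⊗ₜ[ℂ] bv 1)

/-- The full state space, with factors ordered `R, A, S, B, U, W`. -/
abbrev T : Type := Q ⊗[ℂ] (A3 ⊗[ℂ] (Q ⊗[ℂ] (A3 ⊗[ℂ] (A3 ⊗[ℂ] A3))))

namespace FR

/-- Canonical reordering `T ≃ (R ⊗ A) ⊗ (S ⊗ (B ⊗ (U ⊗ W)))`. -/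
def eRA : T ≃ₗ[ℂ] (Q ⊗[ℂ] A3) ⊗[ℂ] (Q ⊗[ℂ] (A3 ⊗[ℂ] (A3 ⊗[ℂ] A3))) :=
  (TensorProduct.assoc ℂ Q A3 (Q ⊗[ℂ] (A3 ⊗[ℂ] (A3 ⊗[ℂ] A3)))).symm

/-- Canonical reordering `T ≃ (A ⊗ S) ⊗ (R ⊗ (B ⊗ (U ⊗ W)))`. -/
def eAS : T ≃ₗ[ℂ] (A3 ⊗[ℂ] Q) ⊗[ℂ] (Q ⊗[ℂ] (A3 ⊗[ℂ] (A3 ⊗[ℂ] A3))) :=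
  (TensorProduct.congr (LinearEquiv.refl ℂ Q)
      (TensorProduct.assoc ℂ A3 Q (A3 ⊗[ℂ] (A3 ⊗[ℂ] A3))).symm) ≪≫ₗ
    TensorProduct.leftComm ℂ Q (A3 ⊗[ℂ] Q) (A3 ⊗[ℂ] (A3 ⊗[ℂ] A3))

/-- Canonical reordering `T ≃ (S ⊗ B) ⊗ (R ⊗ (A ⊗ (U ⊗ W)))`. -/
def eSB : T ≃ₗ[ℂ] (Q ⊗[ℂ] A3) ⊗[ℂ] (Q ⊗[ℂ] (A3 ⊗[ℂ] (A3 ⊗[ℂ] A3))) :=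
  (TensorProduct.congr (LinearEquiv.refl ℂ Q)
      (TensorProduct.congr (LinearEquiv.refl ℂ A3)
        (TensorProduct.assoc ℂ Q A3 (A3 ⊗[ℂ] A3)).symm)) ≪≫ₗ
  (TensorProduct.congr (LinearEquiv.refl ℂ Q)
      (TensorProduct.leftComm ℂ A3 (Q ⊗[ℂ] A3) (A3 ⊗[ℂ] A3))) ≪≫ₗ
  TensorProduct.leftComm ℂ Q (Q ⊗[ℂ] A3) (A3 ⊗[ℂ] (A3 ⊗[ℂ] A3))

/-- Canonical reordering `T ≃ ((R ⊗ A) ⊗ U) ⊗ (S ⊗ (B ⊗ W))`. -/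
def eRAU : T ≃ₗ[ℂ] ((Q ⊗[ℂ] A3) ⊗[ℂ] A3) ⊗[ℂ] (Q ⊗[ℂ] (A3 ⊗[ℂ] A3)) :=
  -- swap U past B, then past S; regroup A and U with R; finally split off R ⊗ A ⊗ U
  (TensorProduct.congr (LinearEquiv.refl ℂ Q)
      (TensorProduct.congr (LinearEquiv.refl ℂ A3)
        (TensorProduct.congr (LinearEquiv.refl ℂ Q)
          (TensorProduct.leftComm ℂ A3 A3 A3)))) ≪≫ₗ
  (TensorProduct.congr (LinearEquiv.refl ℂ Q)
      (TensorProduct.congr (LinearEquiv.refl ℂ A3)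
        (TensorProduct.leftComm ℂ Q A3 (A3 ⊗[ℂ] A3)))) ≪≫ₗ
  (TensorProduct.congr (LinearEquiv.refl ℂ Q)
      (TensorProduct.assoc ℂ A3 A3 (Q ⊗[ℂ] (A3 ⊗[ℂ] A3))).symm) ≪≫ₗ
  (TensorProduct.assoc ℂ Q (A3 ⊗[ℂ] A3) (Q ⊗[ℂ] (A3 ⊗[ℂ] A3))).symm ≪≫ₗ
  (TensorProduct.congr (TensorProduct.assoc ℂ Q A3 A3).symm
      (LinearEquiv.refl ℂ (Q ⊗[ℂ] (A3 ⊗[ℂ] A3))))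

/-- Canonical reordering `T ≃ ((S ⊗ B) ⊗ W) ⊗ (R ⊗ (A ⊗ U))`. -/
def eSBW : T ≃ₗ[ℂ] ((Q ⊗[ℂ] A3) ⊗[ℂ] A3) ⊗[ℂ] (Q ⊗[ℂ] (A3 ⊗[ℂ] A3)) :=
  -- swap U past B and S; group (S ⊗ B) ⊗ W; then move it to the front
  (TensorProduct.congr (LinearEquiv.refl ℂ Q)
      (TensorProduct.congr (LinearEquiv.refl ℂ A3)
        (TensorProduct.congr (LinearEquiv.refl ℂ Q)
          (TensorProduct.leftComm ℂ A3 A3 A3)))) ≪≫ₗ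
  (TensorProduct.congr (LinearEquiv.refl ℂ Q)
      (TensorProduct.congr (LinearEquiv.refl ℂ A3)
        (TensorProduct.leftComm ℂ Q A3 (A3 ⊗[ℂ] A3)))) ≪≫ₗ
  (TensorProduct.congr (LinearEquiv.refl ℂ Q)
      (TensorProduct.congr (LinearEquiv.refl ℂ A3)
        (TensorProduct.congr (LinearEquiv.refl ℂ A3)
          (TensorProduct.assoc ℂ Q A3 A3).symm))) ≪≫ₗ
  (TensorProduct.congr (LinearEquiv.refl ℂ Q)
      (TensorProduct.congr (LinearEquiv.refl ℂ A3)
        (TensorProduct.comm ℂ A3 ((Q ⊗[ℂ] A3) ⊗[ℂ] A3)))) ≪≫ₗ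
  (TensorProduct.congr (LinearEquiv.refl ℂ Q)
      (TensorProduct.leftComm ℂ A3 ((Q ⊗[ℂ] A3) ⊗[ℂ] A3) A3)) ≪≫ₗ
  TensorProduct.leftComm ℂ Q ((Q ⊗[ℂ] A3) ⊗[ℂ] A3) (A3 ⊗[ℂ] A3)

/-- Canonical reordering `T ≃ (R ⊗ A) ⊗ ((S ⊗ B) ⊗ (U ⊗ W))`, used to express the
final state. -/
def eFin : T ≃ₗ[ℂ] (Q ⊗[ℂ] A3) ⊗[ℂ] ((Q ⊗[ℂ] A3) ⊗[ℂ] (A3 ⊗[ℂ] A3)) :=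
  (TensorProduct.congr (LinearEquiv.refl ℂ Q)
      (TensorProduct.congr (LinearEquiv.refl ℂ A3)
        (TensorProduct.assoc ℂ Q A3 (A3 ⊗[ℂ] A3)).symm)) ≪≫ₗ
  (TensorProduct.assoc ℂ Q A3 ((Q ⊗[ℂ] A3) ⊗[ℂ] (A3 ⊗[ℂ] A3))).symm

end FR

open FR

/-!
Before the Bell-type measurements the amplitude `α` of `e₀` contributes the product of
`e₀ ⊗ b₀ = (Φ⁺ + Φ⁻)/√2` with itself, and the amplitude `β` of `e₁` contributes
`e₁ ⊗ b₁ = (Φ⁺ - Φ⁻)/√2` times `Φ⁺`, because Alice's preparation turns `S` into `(e₀ + e₁)/√2` and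
Bob's measurement turns that into `Φ⁺`. Expanding in the Bell-type basis gives the amplitudes
`α/2 ± β/√2` and `α/2`, and Ursula and Wigner merely record the signs.
-/

namespace FR

section LocalOp

variable {R V M N : Type*} [CommSemiring R] [AddCommMonoid V] [Module R V]
  [AddCommMonoid M] [Module R M] [AddCommMonoid N] [Module R N]

/-- The operator on `V` that acts as `m` on the first factor of a decomposition `V ≃ M ⊗ N` and as
the identity on the second. The global protocol operators have this form, with `E` one of the
canonical reorderings. -/
def localOp (E : V ≃ₗ[R] M ⊗[R] N) (m : M →ₗ[R] M) : V →ₗ[R] V :=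
  E.symm.toLinearMap ∘ₗ TensorProduct.map m LinearMap.id ∘ₗ E.toLinearMap

lemma localOp_apply_of_eq_tmul {E : V ≃ₗ[R] M ⊗[R] N} {m : M →ₗ[R] M} {v v' : V} {x : M} {n : N}
    (hv : E v = x ⊗ₜ[R] n) (hv' : E v' = m x ⊗ₜ[R] n) : localOp E m v = v' := by
  rw [localOp, LinearMap.comp_apply, LinearMap.comp_apply, LinearEquiv.coe_coe, LinearEquiv.coe_coe,
    hv, TensorProduct.map_tmul, LinearMap.id_apply, ← hv', LinearEquiv.symm_apply_apply]

end LocalOp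

section Reordering

open TensorProduct (assoc comm congr leftComm)

lemma eFin_symm_trans_eRA :
    eFin.symm ≪≫ₗ eRA = congr (.refl ℂ (Q ⊗[ℂ] A3)) (assoc ℂ Q A3 (A3 ⊗[ℂ] A3)) := by
  apply LinearEquiv.toLinearMap_injective
  ext
  rfl

lemma eFin_symm_trans_eSB :
    eFin.symm ≪≫ₗ eSB =
      leftComm ℂ (Q ⊗[ℂ] A3) (Q ⊗[ℂ] A3) (A3 ⊗[ℂ] A3) ≪≫ₗ
        congr (.refl ℂ (Q ⊗[ℂ] A3)) (assoc ℂ Q A3 (A3 ⊗[ℂ] A3)) := by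
  apply LinearEquiv.toLinearMap_injective
  ext
  rfl

lemma eFin_symm_trans_eRAU :
    eFin.symm ≪≫ₗ eRAU =
      congr (.refl ℂ (Q ⊗[ℂ] A3)) (leftComm ℂ (Q ⊗[ℂ] A3) A3 A3) ≪≫ₗ
        (assoc ℂ (Q ⊗[ℂ] A3) A3 ((Q ⊗[ℂ] A3) ⊗[ℂ] A3)).symm ≪≫ₗ
        congr (.refl ℂ ((Q ⊗[ℂ] A3) ⊗[ℂ] A3)) (assoc ℂ Q A3 A3) := by
  apply LinearEquiv.toLinearMap_injective
  ext
  rfl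

lemma eFin_symm_trans_eSBW :
    eFin.symm ≪≫ₗ eSBW =
      congr (.refl ℂ (Q ⊗[ℂ] A3))
          (congr (.refl ℂ (Q ⊗[ℂ] A3)) (comm ℂ A3 A3) ≪≫ₗ
            (assoc ℂ (Q ⊗[ℂ] A3) A3 A3).symm) ≪≫ₗ
        leftComm ℂ (Q ⊗[ℂ] A3) ((Q ⊗[ℂ] A3) ⊗[ℂ] A3) A3 ≪≫ₗ
        congr (.refl ℂ ((Q ⊗[ℂ] A3) ⊗[ℂ] A3)) (assoc ℂ Q A3 A3) := by
  apply LinearEquiv.toLinearMap_injective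
  ext
  rfl

end Reordering

lemma eFin_symm_tmul (r s : Q) (a b : A3) (z : A3 ⊗[ℂ] A3) :
    eFin.symm ((r ⊗ₜ[ℂ] a) ⊗ₜ[ℂ] ((s ⊗ₜ[ℂ] b) ⊗ₜ[ℂ] z)) =
      r ⊗ₜ[ℂ] (a ⊗ₜ[ℂ] (s ⊗ₜ[ℂ] (b ⊗ₜ[ℂ] z))) :=
  rfl

lemma localOp_eRA_eFin_symm (m : Q ⊗[ℂ] A3 →ₗ[ℂ] Q ⊗[ℂ] A3) (x y : Q ⊗[ℂ] A3)
    (z : A3 ⊗[ℂ] A3) :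
    localOp eRA m (eFin.symm (x ⊗ₜ[ℂ] (y ⊗ₜ[ℂ] z))) = eFin.symm (m x ⊗ₜ[ℂ] (y ⊗ₜ[ℂ] z)) :=
  localOp_apply_of_eq_tmul (LinearEquiv.congr_fun eFin_symm_trans_eRA _)
    (LinearEquiv.congr_fun eFin_symm_trans_eRA _)

lemma localOp_eAS_eFin_symm {m : A3 ⊗[ℂ] Q →ₗ[ℂ] A3 ⊗[ℂ] Q} {a a' : A3} {s s' : Q}
    (h : m (a ⊗ₜ[ℂ] s) = a' ⊗ₜ[ℂ] s') (r : Q) (b : A3) (z : A3 ⊗[ℂ] A3) :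
    localOp eAS m (eFin.symm ((r ⊗ₜ[ℂ] a) ⊗ₜ[ℂ] ((s ⊗ₜ[ℂ] b) ⊗ₜ[ℂ] z))) =
      eFin.symm ((r ⊗ₜ[ℂ] a') ⊗ₜ[ℂ] ((s' ⊗ₜ[ℂ] b) ⊗ₜ[ℂ] z)) :=
  localOp_apply_of_eq_tmul rfl (h ▸ rfl)

lemma localOp_eSB_eFin_symm (m : Q ⊗[ℂ] A3 →ₗ[ℂ] Q ⊗[ℂ] A3) (x y : Q ⊗[ℂ] A3)
    (z : A3 ⊗[ℂ] A3) :
    localOp eSB m (eFin.symm (x ⊗ₜ[ℂ] (y ⊗ₜ[ℂ] z))) = eFin.symm (x ⊗ₜ[ℂ] (m y ⊗ₜ[ℂ] z)) :=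
  localOp_apply_of_eq_tmul (LinearEquiv.congr_fun eFin_symm_trans_eSB _)
    (LinearEquiv.congr_fun eFin_symm_trans_eSB _)

lemma localOp_eRAU_eFin_symm {m : (Q ⊗[ℂ] A3) ⊗[ℂ] A3 →ₗ[ℂ] (Q ⊗[ℂ] A3) ⊗[ℂ] A3}
    {x x' : Q ⊗[ℂ] A3} {u u' : A3} (h : m (x ⊗ₜ[ℂ] u) = x' ⊗ₜ[ℂ] u') (y : Q ⊗[ℂ] A3) (w : A3) :
    localOp eRAU m (eFin.symm (x ⊗ₜ[ℂ] (y ⊗ₜ[ℂ] (u ⊗ₜ[ℂ] w)))) =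
      eFin.symm (x' ⊗ₜ[ℂ] (y ⊗ₜ[ℂ] (u' ⊗ₜ[ℂ] w))) :=
  localOp_apply_of_eq_tmul (LinearEquiv.congr_fun eFin_symm_trans_eRAU _)
    (h ▸ LinearEquiv.congr_fun eFin_symm_trans_eRAU _)

lemma localOp_eSBW_eFin_symm {m : (Q ⊗[ℂ] A3) ⊗[ℂ] A3 →ₗ[ℂ] (Q ⊗[ℂ] A3) ⊗[ℂ] A3}
    {y y' : Q ⊗[ℂ] A3} {w w' : A3} (h : m (y ⊗ₜ[ℂ] w) = y' ⊗ₜ[ℂ] w') (x : Q ⊗[ℂ] A3) (u : A3) :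
    localOp eSBW m (eFin.symm (x ⊗ₜ[ℂ] (y ⊗ₜ[ℂ] (u ⊗ₜ[ℂ] w)))) =
      eFin.symm (x ⊗ₜ[ℂ] (y' ⊗ₜ[ℂ] (u ⊗ₜ[ℂ] w'))) :=
  localOp_apply_of_eq_tmul (LinearEquiv.congr_fun eFin_symm_trans_eSBW _)
    (h ▸ LinearEquiv.congr_fun eFin_symm_trans_eSBW _)

lemma c_mul {x : ℝ} (hx : 0 ≤ x) (y : ℝ) : c (x * y) = c x * c y := by
  rw [c, Real.sqrt_mul hx, Complex.ofReal_mul, c, c]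

lemma c_sq_mul {x : ℝ} (hx : 0 ≤ x) (y : ℝ) : c (x ^ 2 * y) = x * c y := by
  rw [c_mul (sq_nonneg x), c, Real.sqrt_sq hx]

lemma c_ne_zero {x : ℝ} (hx : 0 < x) : c x ≠ 0 :=
  Complex.ofReal_ne_zero.mpr (Real.sqrt_ne_zero'.mpr hx)

lemma c_two_thirds_div_c_two : c (2 / 3) / c 2 = c (1 / 3) := by
  rw [show (2 / 3 : ℝ) = 2 * (1 / 3) by norm_num, c_mul zero_le_two,
    mul_div_cancel_left₀ _ (c_ne_zero two_pos)]

lemma c_one_twelfth : c (1 / 12) = c (1 / 3) / 2 := by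
  rw [show (1 / 12 : ℝ) = (1 / 2) ^ 2 * (1 / 3) by norm_num, c_sq_mul (by norm_num)]
  push_cast
  ring

lemma c_three_fourths : c (3 / 4) = c (1 / 3) / 2 + c (2 / 3) / c 2 := by
  rw [show (3 / 4 : ℝ) = (3 / 2) ^ 2 * (1 / 3) by norm_num, c_sq_mul (by norm_num),
    c_two_thirds_div_c_two]
  push_cast
  ring

lemma neg_c_one_twelfth : -c (1 / 12) = c (1 / 3) / 2 - c (2 / 3) / c 2 := by
  rw [c_one_twelfth, c_two_thirds_div_c_two]
  ring

lemma c_two_inv_mul_self : (c 2)⁻¹ * (c 2)⁻¹ = 2⁻¹ := by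
  rw [← mul_inv, c, ← Complex.ofReal_mul, Real.mul_self_sqrt zero_le_two, Complex.ofReal_ofNat]

lemma e_zero_tmul_bv_zero : e 0 ⊗ₜ[ℂ] bv 0 = (c 2)⁻¹ • (Φp + Φm) := by
  rw [Φp, Φm, ← smul_add, smul_smul, c_two_inv_mul_self]
  module

lemma e_one_tmul_bv_one : e 1 ⊗ₜ[ℂ] bv 1 = (c 2)⁻¹ • (Φp - Φm) := by
  rw [Φp, Φm, ← smul_sub, smul_smul, c_two_inv_mul_self]
  module

lemma bell_basis_expansion (α β : ℂ) (z : A3 ⊗[ℂ] A3) :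
    α • ((e 0 ⊗ₜ[ℂ] bv 0) ⊗ₜ[ℂ] ((e 0 ⊗ₜ[ℂ] bv 0) ⊗ₜ[ℂ] z)) +
        β • ((e 1 ⊗ₜ[ℂ] bv 1) ⊗ₜ[ℂ] (Φp ⊗ₜ[ℂ] z)) =
      (α / 2 + β / c 2) • (Φp ⊗ₜ[ℂ] (Φp ⊗ₜ[ℂ] z)) + (α / 2) • (Φp ⊗ₜ[ℂ] (Φm ⊗ₜ[ℂ] z)) +
        (α / 2 - β / c 2) • (Φm ⊗ₜ[ℂ] (Φp ⊗ₜ[ℂ] z)) + (α / 2) • (Φm ⊗ₜ[ℂ] (Φm ⊗ₜ[ℂ] z)) := by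
  have zero_zero : (e 0 ⊗ₜ[ℂ] bv 0) ⊗ₜ[ℂ] ((e 0 ⊗ₜ[ℂ] bv 0) ⊗ₜ[ℂ] z) =
      (2 : ℂ)⁻¹ • ((Φp + Φm) ⊗ₜ[ℂ] ((Φp + Φm) ⊗ₜ[ℂ] z)) := by
    rw [e_zero_tmul_bv_zero, ← TensorProduct.smul_tmul', ← TensorProduct.smul_tmul',
      TensorProduct.tmul_smul, smul_smul, c_two_inv_mul_self]
  have one_plus : (e 1 ⊗ₜ[ℂ] bv 1) ⊗ₜ[ℂ] (Φp ⊗ₜ[ℂ] z) =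
      (c 2)⁻¹ • ((Φp - Φm) ⊗ₜ[ℂ] (Φp ⊗ₜ[ℂ] z)) := by
    rw [e_one_tmul_bv_one, ← TensorProduct.smul_tmul']
  simp only [zero_zero, one_plus, TensorProduct.add_tmul, TensorProduct.sub_tmul,
    TensorProduct.tmul_add]
  module

lemma state_before_bell_measurements {mA : Q ⊗[ℂ] A3 →ₗ[ℂ] Q ⊗[ℂ] A3}
    (hmA : ∀ r : Fin 2, mA (e r ⊗ₜ[ℂ] bv 2) = e r ⊗ₜ[ℂ] bv r.castSucc)
    {p : A3 ⊗[ℂ] Q →ₗ[ℂ] A3 ⊗[ℂ] Q}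
    (hp0 : p (bv 0 ⊗ₜ[ℂ] e 0) = bv 0 ⊗ₜ[ℂ] e 0)
    (hp1 : p (bv 1 ⊗ₜ[ℂ] e 0) = bv 1 ⊗ₜ[ℂ] ((c 2)⁻¹ • (e 0 + e 1)))
    {mB : Q ⊗[ℂ] A3 →ₗ[ℂ] Q ⊗[ℂ] A3}
    (hmB : ∀ s : Fin 2, mB (e s ⊗ₜ[ℂ] bv 2) = e s ⊗ₜ[ℂ] bv s.castSucc)
    (α β : ℂ) (z : A3 ⊗[ℂ] A3) :
    localOp eSB mB (localOp eAS p (localOp eRA mA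
        ((α • e 0 + β • e 1) ⊗ₜ[ℂ] (bv 2 ⊗ₜ[ℂ] (e 0 ⊗ₜ[ℂ] (bv 2 ⊗ₜ[ℂ] z)))))) =
      eFin.symm (α • ((e 0 ⊗ₜ[ℂ] bv 0) ⊗ₜ[ℂ] ((e 0 ⊗ₜ[ℂ] bv 0) ⊗ₜ[ℂ] z)) +
        β • ((e 1 ⊗ₜ[ℂ] bv 1) ⊗ₜ[ℂ] (Φp ⊗ₜ[ℂ] z))) := by
  have alice : mA ((α • e 0 + β • e 1) ⊗ₜ[ℂ] bv 2) =
      α • (e 0 ⊗ₜ[ℂ] bv 0) + β • (e 1 ⊗ₜ[ℂ] bv 1) := by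
    rw [TensorProduct.add_tmul, ← TensorProduct.smul_tmul', ← TensorProduct.smul_tmul', map_add,
      map_smul, map_smul, hmA, hmA, Fin.castSucc_zero, Fin.castSucc_one]
  have bob_zero : mB (e 0 ⊗ₜ[ℂ] bv 2) = e 0 ⊗ₜ[ℂ] bv 0 := hmB 0
  have bob_superposition : mB (((c 2)⁻¹ • (e 0 + e 1)) ⊗ₜ[ℂ] bv 2) = Φp := by
    rw [← TensorProduct.smul_tmul', TensorProduct.add_tmul, map_smul, map_add, hmB, hmB,
      Fin.castSucc_zero, Fin.castSucc_one, Φp]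
  calc
    _ = localOp eSB mB (localOp eAS p (eFin.symm
          (α • ((e 0 ⊗ₜ[ℂ] bv 0) ⊗ₜ[ℂ] ((e 0 ⊗ₜ[ℂ] bv 2) ⊗ₜ[ℂ] z)) +
            β • ((e 1 ⊗ₜ[ℂ] bv 1) ⊗ₜ[ℂ] ((e 0 ⊗ₜ[ℂ] bv 2) ⊗ₜ[ℂ] z))))) := by
      rw [← eFin_symm_tmul, localOp_eRA_eFin_symm, alice, TensorProduct.add_tmul,
        ← TensorProduct.smul_tmul', ← TensorProduct.smul_tmul']
    _ = localOp eSB mB (eFin.symm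
          (α • ((e 0 ⊗ₜ[ℂ] bv 0) ⊗ₜ[ℂ] ((e 0 ⊗ₜ[ℂ] bv 2) ⊗ₜ[ℂ] z)) +
            β • ((e 1 ⊗ₜ[ℂ] bv 1) ⊗ₜ[ℂ]
              ((((c 2)⁻¹ • (e 0 + e 1)) ⊗ₜ[ℂ] bv 2) ⊗ₜ[ℂ] z)))) := by
      simp only [map_add, map_smul, localOp_eAS_eFin_symm hp0, localOp_eAS_eFin_symm hp1]
    _ = _ := by
      simp only [map_add, map_smul, localOp_eSB_eFin_symm, bob_zero, bob_superposition]

end FR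

theorem frauchiger_renner_final_state_general
    (mA : Q ⊗[ℂ] A3 →ₗ[ℂ] Q ⊗[ℂ] A3)
    (hmA : ∀ r : Fin 2, mA (e r ⊗ₜ[ℂ] bv 2) = e r ⊗ₜ[ℂ] bv r.castSucc)
    (p : A3 ⊗[ℂ] Q →ₗ[ℂ] A3 ⊗[ℂ] Q)
    (hp0 : p (bv 0 ⊗ₜ[ℂ] e 0) = bv 0 ⊗ₜ[ℂ] e 0)
    (hp1 : p (bv 1 ⊗ₜ[ℂ] e 0) = bv 1 ⊗ₜ[ℂ] ((c 2)⁻¹ • (e 0 + e 1)))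
    (mB : Q ⊗[ℂ] A3 →ₗ[ℂ] Q ⊗[ℂ] A3)
    (hmB : ∀ s : Fin 2, mB (e s ⊗ₜ[ℂ] bv 2) = e s ⊗ₜ[ℂ] bv s.castSucc)
    (mU : (Q ⊗[ℂ] A3) ⊗[ℂ] A3 →ₗ[ℂ] (Q ⊗[ℂ] A3) ⊗[ℂ] A3)
    (hmUp : mU (Φp ⊗ₜ[ℂ] bv 2) = Φp ⊗ₜ[ℂ] bv 0)
    (hmUm : mU (Φm ⊗ₜ[ℂ] bv 2) = Φm ⊗ₜ[ℂ] bv 1)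
    (mW : (Q ⊗[ℂ] A3) ⊗[ℂ] A3 →ₗ[ℂ] (Q ⊗[ℂ] A3) ⊗[ℂ] A3)
    (hmWp : mW (Φp ⊗ₜ[ℂ] bv 2) = Φp ⊗ₜ[ℂ] bv 0)
    (hmWm : mW (Φm ⊗ₜ[ℂ] bv 2) = Φm ⊗ₜ[ℂ] bv 1)
    (α β : ℂ) :
    eFin (localOp eSBW mW (localOp eRAU mU (localOp eSB mB (localOp eAS p (localOp eRA mA
        ((α • e 0 + β • e 1) ⊗ₜ[ℂ]
          (bv 2 ⊗ₜ[ℂ] (e 0 ⊗ₜ[ℂ] (bv 2 ⊗ₜ[ℂ] (bv 2 ⊗ₜ[ℂ] bv 2)))))))))) =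
      (α / 2 + β / c 2) • (Φp ⊗ₜ[ℂ] (Φp ⊗ₜ[ℂ] (bv 0 ⊗ₜ[ℂ] bv 0)))
        + (α / 2) • (Φp ⊗ₜ[ℂ] (Φm ⊗ₜ[ℂ] (bv 0 ⊗ₜ[ℂ] bv 1)))
        + (α / 2 - β / c 2) • (Φm ⊗ₜ[ℂ] (Φp ⊗ₜ[ℂ] (bv 1 ⊗ₜ[ℂ] bv 0)))
        + (α / 2) • (Φm ⊗ₜ[ℂ] (Φm ⊗ₜ[ℂ] (bv 1 ⊗ₜ[ℂ] bv 1))) := by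
  rw [state_before_bell_measurements hmA hp0 hp1 hmB, bell_basis_expansion]
  simp only [map_add, map_smul, localOp_eRAU_eFin_symm hmUp, localOp_eRAU_eFin_symm hmUm,
    localOp_eSBW_eFin_symm hmWp, localOp_eSBW_eFin_symm hmWm, LinearEquiv.apply_symm_apply]

/-- for any linear extensions `mA, p, mB, mU, mW` of the partially
specified measurement/preparation operators (in particular for the restrictions to
the indicated factors of any unitary operators as in the paper), applying the five
protocol steps to the initial state `Ψ₀` yields the Frauchiger–Renner final state
`√(3/4) Φ⁺_{RA} Φ⁺_{SB} v₊ v₊ + √(1/12) Φ⁺_{RA} Φ⁻_{SB} v₊ v₋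
  − √(1/12) Φ⁻_{RA} Φ⁺_{SB} v₋ v₊ + √(1/12) Φ⁻_{RA} Φ⁻_{SB} v₋ v₋`. -/
theorem frauchiger_renner_final_state
    -- Alice's measurement of R, acting on the factors (R, A)
    (mA : Q ⊗[ℂ] A3 →ₗ[ℂ] Q ⊗[ℂ] A3)
    (hmA : ∀ r : Fin 2, mA (e r ⊗ₜ[ℂ] bv 2) = e r ⊗ₜ[ℂ] bv r.castSucc)
    -- Alice's conditional preparation of S, acting on the factors (A, S)
    (p : A3 ⊗[ℂ] Q →ₗ[ℂ] A3 ⊗[ℂ] Q)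
    (hp0 : ∀ s : Fin 2, p (bv 0 ⊗ₜ[ℂ] e s) = bv 0 ⊗ₜ[ℂ] e s)
    (hp10 : p (bv 1 ⊗ₜ[ℂ] e 0) = bv 1 ⊗ₜ[ℂ] ((c 2)⁻¹ • (e 0 + e 1)))
    (hp11 : p (bv 1 ⊗ₜ[ℂ] e 1) = bv 1 ⊗ₜ[ℂ] ((c 2)⁻¹ • (e 0 - e 1)))
    -- Bob's measurement of S, acting on the factors (S, B)
    (mB : Q ⊗[ℂ] A3 →ₗ[ℂ] Q ⊗[ℂ] A3)
    (hmB : ∀ s : Fin 2, mB (e s ⊗ₜ[ℂ] bv 2) = e s ⊗ₜ[ℂ] bv s.castSucc)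
    -- Ursula's Bell-basis measurement of (R, A), acting on the factors (R, A, U)
    (mU : (Q ⊗[ℂ] A3) ⊗[ℂ] A3 →ₗ[ℂ] (Q ⊗[ℂ] A3) ⊗[ℂ] A3)
    (hmUp : mU (Φp ⊗ₜ[ℂ] bv 2) = Φp ⊗ₜ[ℂ] bv 0)
    (hmUm : mU (Φm ⊗ₜ[ℂ] bv 2) = Φm ⊗ₜ[ℂ] bv 1)
    -- Wigner's Bell-basis measurement of (S, B), acting on the factors (S, B, W)
    (mW : (Q ⊗[ℂ] A3) ⊗[ℂ] A3 →ₗ[ℂ] (Q ⊗[ℂ] A3) ⊗[ℂ] A3)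
    (hmWp : mW (Φp ⊗ₜ[ℂ] bv 2) = Φp ⊗ₜ[ℂ] bv 0)
    (hmWm : mW (Φm ⊗ₜ[ℂ] bv 2) = Φm ⊗ₜ[ℂ] bv 1) :
    -- the global operators, each acting as the identity outside the indicated factors
    let MA : T →ₗ[ℂ] T :=
      eRA.symm.toLinearMap ∘ₗ TensorProduct.map mA LinearMap.id ∘ₗ eRA.toLinearMap
    let P : T →ₗ[ℂ] T :=
      eAS.symm.toLinearMap ∘ₗ TensorProduct.map p LinearMap.id ∘ₗ eAS.toLinearMap
    let MB : T →ₗ[ℂ] T :=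
      eSB.symm.toLinearMap ∘ₗ TensorProduct.map mB LinearMap.id ∘ₗ eSB.toLinearMap
    let MU : T →ₗ[ℂ] T :=
      eRAU.symm.toLinearMap ∘ₗ TensorProduct.map mU LinearMap.id ∘ₗ eRAU.toLinearMap
    let MW : T →ₗ[ℂ] T :=
      eSBW.symm.toLinearMap ∘ₗ TensorProduct.map mW LinearMap.id ∘ₗ eSBW.toLinearMap
    -- the initial state: R in √(1/3)|0⟩ + √(2/3)|1⟩, S in |0⟩, all agents in ⊥
    let Ψ₀ : T :=
      (c (1/3) • e 0 + c (2/3) • e 1) ⊗ₜ[ℂ]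
        (bv 2 ⊗ₜ[ℂ] (e 0 ⊗ₜ[ℂ] (bv 2 ⊗ₜ[ℂ] (bv 2 ⊗ₜ[ℂ] bv 2))))
    eFin (MW (MU (MB (P (MA Ψ₀))))) =
      c (3/4) • (Φp ⊗ₜ[ℂ] (Φp ⊗ₜ[ℂ] (bv 0 ⊗ₜ[ℂ] bv 0)))
        + c (1/12) • (Φp ⊗ₜ[ℂ] (Φm ⊗ₜ[ℂ] (bv 0 ⊗ₜ[ℂ] bv 1)))
        + (-(c (1/12))) • (Φm ⊗ₜ[ℂ] (Φp ⊗ₜ[ℂ] (bv 1 ⊗ₜ[ℂ] bv 0)))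
        + c (1/12) • (Φm ⊗ₜ[ℂ] (Φm ⊗ₜ[ℂ] (bv 1 ⊗ₜ[ℂ] bv 1))) := by
  rw [c_three_fourths, neg_c_one_twelfth, c_one_twelfth]
  convert frauchiger_renner_final_state_general mA hmA p (hp0 0) hp10 mB hmB mU hmUp hmUm mW hmWp
    hmWm (c (1 / 3)) (c (2 / 3)) <;> rfl

end
end
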